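/- Let f ∈ ℤ_p[x] of degree d, k > d(Δ+1), α_i a ℤ_p-root of f of multiplicity e_i with ν_i := v_p(f_i(α_i)) where f_i = f/(x−α_i)^{e_i}. For ᾱ ∈ ℤ_p with v_p(ᾱ − α_i) > Δ: f(ᾱ) ≡ 0 mod p^k if and only if v_p(ᾱ − α_i) ≥ ⌈(k − ν_i)/e_i⌉. -/

import Mathlib

open Polynomial

noncomputable def padicEmb (p : ℕ) [Fact p.Prime] : ℤ_[p] →+* AlgebraicClosure ℚ_[p] :=
  (algebraMap ℚ_[p] (AlgebraicClosure ℚ_[p])).comp (PadicInt.Coe.ringHom)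

/-- The discriminant `D(h) = h_m^{2m-1} · ∏_{i<j} (r_i - r_j)^2`, computed from the
roots `r_i` of `h` in the algebraic closure of `ℚ_p`. -/
noncomputable def padicDisc (p : ℕ) [Fact p.Prime] (h : Polynomial ℤ_[p]) :
    AlgebraicClosure ℚ_[p] :=
  let l := (h.map (padicEmb p)).roots.toList
  (padicEmb p h.leadingCoeff) ^ (2 * h.natDegree - 1) *
    ∏ ij ∈ (Finset.range l.length ×ˢ Finset.range l.length).filter (fun ij => ij.1 < ij.2),
      (l.getD ij.1 0 - l.getD ij.2 0) ^ 2

/-!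
Let `h` be the radical of `f` and `D` its discriminant, let `a` be a root of `f`, and write
`f = (X - a) ^ e * fa`. Since `h` vanishes at `a`, every factor `q` of `h` with `q(a) ≠ 0` has
`q(a) ∣ h'(a)`, and a Bézout relation for the resultant of `h` and `h'` gives `h'(a) ∣ D`.
If `b - a` is a proper multiple of `D`, then `q(b) - q(a)`, being a multiple of `b - a`, is a proper
multiple of `q(a)`, so `q(b)` and `q(a)` differ by a unit. Multiplying over the prime factors
of `fa` shows that `f(b)` is a unit times `(b - a) ^ e * fa(a)`, whose valuation is
`e * v(b - a) + ν`.
-/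

theorem prime_dvd_prod_of_dvd_prod_pow {ι M : Type*} [CommMonoidWithZero M] {q : M} (hq : Prime q)
    {s : Finset ι} {x : ι → M} {e : ι → ℕ} (h : q ∣ ∏ i ∈ s, x i ^ e i) : q ∣ ∏ i ∈ s, x i := by
  obtain ⟨i, hi, hqi⟩ := (hq.dvd_finsetProd_iff _).mp h
  exact (hq.dvd_of_dvd_pow hqi).trans (Finset.dvd_prod_of_mem x hi)

theorem prod_filter_lt_range_product_getD {K M : Type*} [CommMonoid M] (l : List K) (z : K)
    (F : K → K → M) :
    ∏ ij ∈ (Finset.range l.length ×ˢ Finset.range l.length).filter (fun ij => ij.1 < ij.2),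
      F (l.getD ij.1 z) (l.getD ij.2 z) =
    ∏ i : Fin l.length, ∏ j ∈ Finset.Ioi i, F l[i] l[j] := by
  rw [Finset.prod_filter, Finset.prod_product, Finset.prod_range]
  refine Finset.prod_congr rfl fun i _ => ?_
  rw [Finset.prod_range, ← Finset.filter_lt_eq_Ioi, Finset.prod_filter]
  simp

section Discriminant

variable {R S : Type*} [CommRing R] [CommRing S]

theorem prod_prod_erase_sub {n : ℕ} (r : Fin n → R) :
    ∏ i, ∏ j ∈ Finset.univ.erase i, (r i - r j) =
      (-1) ^ (n * (n - 1) / 2) * ∏ i, ∏ j ∈ Finset.Ioi i, (r i - r j) ^ 2 := by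
  have card_pairs : ∑ i : Fin n, (Finset.Ioi i).card = n * (n - 1) / 2 := by
    simp only [Fin.card_Ioi]
    rw [Fin.sum_univ_eq_sum_range (fun i => n - 1 - i), Finset.sum_range_reflect (fun i => i),
      Finset.sum_range_id]
  calc ∏ i, ∏ j ∈ Finset.univ.erase i, (r i - r j)
      = ∏ i, ∏ j ∈ Finset.Ioi i, (r i - r j) * (r j - r i) := by
        simp only [← Finset.compl_singleton]
        exact (Finset.prod_prod_Ioi_mul_eq_prod_prod_off_diag fun j i => r i - r j).symm
    _ = ∏ i, ∏ j ∈ Finset.Ioi i, (-1) * (r i - r j) ^ 2 :=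
        Finset.prod_congr rfl fun i _ => Finset.prod_congr rfl fun j _ => by ring
    _ = _ := by
        simp only [Finset.prod_mul_distrib, Finset.prod_const, Finset.prod_pow_eq_pow_sum,
          card_pairs]

theorem eval_derivative_root_eq_prod [IsDomain R] {f : R[X]} (hf : f.Splits) {n : ℕ}
    {r : Fin n → R} (hr : f.roots = Finset.univ.val.map r) (i : Fin n) :
    f.derivative.eval (r i) =
      f.leadingCoeff * ∏ j ∈ Finset.univ.erase i, (r i - r j) := by
  have hprod : f = C f.leadingCoeff * Lagrange.nodal Finset.univ r := by
    conv_lhs => rw [hf.eq_prod_roots, hr, Multiset.map_map]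
    rfl
  conv_lhs => rw [hprod]
  rw [derivative_C_mul, eval_C_mul,
    Lagrange.eval_nodal_derivative_eval_node_eq (Finset.mem_univ i), Lagrange.eval_nodal]

theorem leadingCoeff_mul_discr_eq_prod_roots [IsDomain R] {f : R[X]} (hf : f.Splits)
    (hdeg : 0 < f.degree) {n : ℕ} {r : Fin n → R} (hr : f.roots = Finset.univ.val.map r) :
    f.leadingCoeff * f.discr =
      f.leadingCoeff ^ (2 * n - 1) * ∏ i, ∏ j ∈ Finset.Ioi i, (r i - r j) ^ 2 := by
  have hn : f.natDegree = n := by simp [hf.natDegree_eq_card_roots, hr]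
  have hpos : 0 < n := hn ▸ natDegree_pos_iff_degree_pos.mpr hdeg
  apply (isUnit_neg_one.pow (n * (n - 1) / 2)).mul_left_cancel
  calc (-1) ^ (n * (n - 1) / 2) * (f.leadingCoeff * f.discr)
      = f.resultant f.derivative f.natDegree (n - 1) := by
        rw [← hn, resultant_deriv hdeg, mul_assoc]
    _ = f.leadingCoeff ^ (n - 1) * ∏ i, f.derivative.eval (r i) := by
        rw [resultant_eq_prod_eval f _ _ (hn ▸ natDegree_derivative_le f) hf, hr,
          Multiset.map_map]
        rfl
    _ = f.leadingCoeff ^ (n - 1) * (f.leadingCoeff ^ n *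
          ((-1) ^ (n * (n - 1) / 2) * ∏ i, ∏ j ∈ Finset.Ioi i, (r i - r j) ^ 2)) := by
        simp only [eval_derivative_root_eq_prod hf hr, Finset.prod_mul_distrib,
          Finset.prod_const, Finset.card_univ, Fintype.card_fin, ← prod_prod_erase_sub]
    _ = _ := by
        rw [show 2 * n - 1 = (n - 1) + n by omega, pow_add]
        ring

theorem map_leadingCoeff_mul_discr {φ : R →+* S} (hφ : Function.Injective φ) {f : R[X]}
    (hdeg : 0 < f.degree) :
    φ (f.leadingCoeff * f.discr) = (f.map φ).leadingCoeff * (f.map φ).discr := by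
  have hres := congrArg φ (resultant_deriv hdeg)
  have hres_map := resultant_deriv (f := f.map φ) (by rwa [degree_map_eq_of_injective hφ])
  rw [derivative_map, resultant_map_map, natDegree_map_eq_of_injective hφ, hres] at hres_map
  simp only [map_mul, map_pow, map_neg, map_one, mul_assoc] at hres_map
  rw [map_mul]
  exact (isUnit_neg_one.pow _).mul_left_cancel hres_map

theorem eval_derivative_dvd_leadingCoeff_mul_discr {f : R[X]} (hf : f ≠ 0) {a : R}
    (ha : f.IsRoot a) : f.derivative.eval a ∣ f.leadingCoeff * f.discr := by
  have hdeg : 0 < f.degree := degree_pos_of_root hf ha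
  have hnat : f.natDegree ≠ 0 := (natDegree_pos_iff_degree_pos.mpr hdeg).ne'
  obtain ⟨u, v, -, -, bezout⟩ := exists_mul_add_mul_eq_C_resultant f f.derivative le_rfl
    (natDegree_derivative_le f) (Or.inl hnat)
  have bezout_at_root := congrArg (eval a) bezout
  rw [resultant_deriv hdeg, eval_add, eval_mul, eval_mul, ha.eq_zero, zero_mul, zero_add, eval_C,
    mul_assoc] at bezout_at_root
  exact (isUnit_neg_one.pow _).dvd_mul_left.mp (Dvd.intro _ bezout_at_root)

end Discriminant

section LocalRing

variable {R : Type*} [CommRing R]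

theorem associated_eval_of_dvdNotUnit [IsLocalRing R] {q : R[X]} {a b : R}
    (hab : DvdNotUnit (q.eval a) (b - a)) : Associated (q.eval b) (q.eval a) := by
  obtain ⟨-, x, hx, hsub⟩ := hab
  obtain ⟨c, hc⟩ := sub_dvd_eval_sub b a q
  have hunit : IsUnit (1 + x * c) := by
    have hxc : -(x * c) ∈ nonunits R := by
      rw [mem_nonunits_iff, IsUnit.neg_iff]
      exact fun h => hx (isUnit_of_mul_isUnit_left h)
    simpa using IsLocalRing.isUnit_one_sub_self_of_mem_nonunits _ hxc
  have heval : q.eval b = q.eval a * (1 + x * c) := by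
    rw [← sub_add_cancel (q.eval b) (q.eval a), hc, hsub]
    ring
  rw [heval]
  exact associated_mul_unit_left _ _ hunit

theorem dvdNotUnit_of_dvd_of_dvdNotUnit {M : Type*} [CommMonoidWithZero M] [IsCancelMulZero M]
    {x y z : M} (hxy : x ∣ y) (hyz : DvdNotUnit y z) : DvdNotUnit x z := by
  obtain ⟨hdvd, hnot⟩ := dvd_and_not_dvd_iff.mpr hyz
  exact dvdNotUnit_of_dvd_of_not_dvd (hxy.trans hdvd) fun hzx => hnot (hzx.trans hxy)

theorem eval_dvd_eval_derivative_of_dvd [NoZeroDivisors R] {q h : R[X]} (hqh : q ∣ h) {a : R}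
    (ha : h.IsRoot a) (hqa : q.eval a ≠ 0) : q.eval a ∣ h.derivative.eval a := by
  obtain ⟨s, rfl⟩ := hqh
  have hsa : s.eval a = 0 := by simpa [hqa] using ha
  simp [hsa]

theorem associated_eval_of_prime_dvd [IsDomain R] [IsLocalRing R] [UniqueFactorizationMonoid R]
    {f : R[X]} {a b D : R} (hf : ∀ q, Prime q → q ∣ f → q.eval a ∣ D)
    (hab : DvdNotUnit D (b - a)) : Associated (f.eval b) (f.eval a) := by
  induction f using UniqueFactorizationMonoid.induction_on_prime with
  | h₁ => simp
  | h₂ u hu =>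
    exact (associated_one_iff_isUnit.mpr (hu.map (evalRingHom b))).trans
      (associated_one_iff_isUnit.mpr (hu.map (evalRingHom a))).symm
  | h₃ f q _ hq ih =>
    rw [eval_mul, eval_mul]
    exact (associated_eval_of_dvdNotUnit
        (dvdNotUnit_of_dvd_of_dvdNotUnit (hf q hq (dvd_mul_right q f)) hab)).mul_mul
      (ih fun r hr hrf => hf r hr (hrf.mul_left q))

end LocalRing

section Padic

variable {p : ℕ} [Fact p.Prime]

theorem padicEmb_injective : Function.Injective (padicEmb p) :=
  (algebraMap ℚ_[p] (AlgebraicClosure ℚ_[p])).injective.comp Subtype.val_injective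

-- `padicDisc` is not `discr` itself: its leading coefficient has exponent `2m - 1`, not `2m - 2`.
theorem padicDisc_eq_padicEmb {h : ℤ_[p][X]} (hdeg : 0 < h.degree) :
    padicDisc p h = padicEmb p (h.leadingCoeff * h.discr) := by
  set H := h.map (padicEmb p) with hH
  set l := H.roots.toList with hl
  have hsplits : H.Splits := IsAlgClosed.splits H
  have hroots : H.roots = Finset.univ.val.map fun i : Fin l.length => l[i] := by
    rw [Fin.univ_val_map]
    exact (Multiset.coe_toList _).symm.trans (congrArg _ (List.ofFn_getElem (xs := l)).symm)
  have hlen : l.length = h.natDegree := by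
    rw [hl, Multiset.length_toList, ← hsplits.natDegree_eq_card_roots,
      natDegree_map_eq_of_injective padicEmb_injective]
  rw [map_leadingCoeff_mul_discr padicEmb_injective hdeg,
    leadingCoeff_mul_discr_eq_prod_roots hsplits
      (by rwa [degree_map_eq_of_injective padicEmb_injective]) hroots,
    leadingCoeff_map_of_injective padicEmb_injective,
    ← prod_filter_lt_range_product_getD l 0 fun x y => (x - y) ^ 2, hlen, padicDisc]
  simp only [← hH, ← hl, hlen]

theorem eval_derivative_dvd_of_padicEmb_eq_padicDisc {h : ℤ_[p][X]} (h0 : h ≠ 0) {a : ℤ_[p]}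
    (ha : h.IsRoot a) {D : ℤ_[p]} (hD : padicEmb p D = padicDisc p h) :
    h.derivative.eval a ∣ D := by
  rw [padicDisc_eq_padicEmb (degree_pos_of_root h0 ha)] at hD
  exact padicEmb_injective hD ▸ eval_derivative_dvd_leadingCoeff_mul_discr h0 ha

theorem dvdNotUnit_of_norm_lt {x y : ℤ_[p]} (hxy : ‖y‖ < ‖x‖) : DvdNotUnit x y := by
  have hyx : ¬y ∣ x := by
    rintro ⟨c, rfl⟩
    rw [norm_mul] at hxy
    exact hxy.not_ge (mul_le_of_le_one_right (norm_nonneg y) c.norm_le_one)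
  exact dvdNotUnit_of_dvd_of_not_dvd ((ValuationRing.dvd_total x y).resolve_right hyx) hyx

theorem pow_dvd_pow_mul_iff_norm_le (x : ℤ_[p]) {u : ℤ_[p]} (hu : u ≠ 0) {e : ℕ} (he : 0 < e)
    (k : ℕ) :
    (p : ℤ_[p]) ^ k ∣ x ^ e * u ↔
      ‖x‖ ≤ (p : ℝ) ^ (-⌈((k : ℚ) - u.valuation) / e⌉) := by
  obtain rfl | hx := eq_or_ne x 0
  · rw [zero_pow he.ne', zero_mul, norm_zero]
    exact iff_of_true (dvd_zero _) (by positivity)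
  have hp : (1 : ℝ) < p := mod_cast (Fact.out : p.Prime).one_lt
  have he' : (0 : ℚ) < e := mod_cast he
  have hxe : x ^ e ≠ 0 := pow_ne_zero e hx
  calc (p : ℤ_[p]) ^ k ∣ x ^ e * u
      ↔ k ≤ e * x.valuation + u.valuation := by
        rw [← Ideal.mem_span_singleton,
          PadicInt.mem_span_pow_iff_le_valuation _ (mul_ne_zero hxe hu),
          PadicInt.valuation_mul hxe hu, PadicInt.valuation_pow]
    _ ↔ ((k : ℚ) - u.valuation) / e ≤ x.valuation := by
        rw [div_le_iff₀' he', sub_le_iff_le_add]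
        exact_mod_cast Iff.rfl
    _ ↔ ⌈((k : ℚ) - u.valuation) / e⌉ ≤ x.valuation := by
        rw [Int.ceil_le, Int.cast_natCast]
    _ ↔ ‖x‖ ≤ (p : ℝ) ^ (-⌈((k : ℚ) - u.valuation) / e⌉) := by
        rw [PadicInt.norm_eq_zpow_neg_valuation hx, zpow_le_zpow_iff_right₀ hp, neg_le_neg_iff]

theorem stmt9_general {f h : ℤ_[p][X]} (h0 : h ≠ 0) (hfh : ∀ q, Prime q → q ∣ f → q ∣ h)
    {D : ℤ_[p]} (hD : padicEmb p D = padicDisc p h) (hD0 : D ≠ 0)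
    {Δ : ℕ} (hΔ : (Δ : ℤ) = D.valuation) (k : ℕ)
    {a : ℤ_[p]} {e : ℕ} (he : 1 ≤ e) {fa : ℤ_[p][X]}
    (hfa : f = (X - C a) ^ e * fa) (hfa0 : fa.eval a ≠ 0)
    {ν : ℕ} (hν : (ν : ℤ) = (fa.eval a).valuation)
    {l : ℤ} (hl : l = ⌈((k : ℚ) - (ν : ℚ)) / (e : ℚ)⌉)
    {b : ℤ_[p]} (hclose : ‖b - a‖ < (p : ℝ) ^ (-(Δ : ℤ))) :
    (p : ℤ_[p]) ^ k ∣ f.eval b ↔ ‖b - a‖ ≤ (p : ℝ) ^ (-l) := by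
  have hroot : h.IsRoot a :=
    dvd_iff_isRoot.mp <| hfh _ (prime_X_sub_C a) <|
      hfa ▸ (dvd_pow_self _ (Nat.one_le_iff_ne_zero.mp he)).mul_right fa
  have hderiv : h.derivative.eval a ∣ D :=
    eval_derivative_dvd_of_padicEmb_eq_padicDisc h0 hroot hD
  have hfactor : ∀ q, Prime q → q ∣ fa → q.eval a ∣ D := fun q hq hqfa =>
    (eval_dvd_eval_derivative_of_dvd (hfh q hq (hfa ▸ hqfa.mul_left _)) hroot
      (ne_zero_of_dvd_ne_zero hfa0 (eval_dvd hqfa))).trans hderiv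
  have hnear : DvdNotUnit D (b - a) := dvdNotUnit_of_norm_lt <| by
    rwa [PadicInt.norm_eq_zpow_neg_valuation hD0, ← hΔ]
  have hassoc : Associated (f.eval b) ((b - a) ^ e * fa.eval a) := by
    rw [hfa, eval_mul, eval_pow, eval_sub, eval_X, eval_C]
    exact (associated_eval_of_prime_dvd hfactor hnear).mul_left _
  obtain rfl : ν = (fa.eval a).valuation := mod_cast hν
  rw [hassoc.dvd_iff_dvd_right, hl, pow_dvd_pow_mul_iff_norm_le _ hfa0 he]

end Padic

/-- For `k > d(Δ+1)` and `ᾱ` with `v_p(ᾱ - α i) > Δ`: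
`f(ᾱ) ≡ 0 mod p^k` iff `v_p(ᾱ - α i) ≥ ⌈(k - ν_i)/e_i⌉` (the latter encoded as
`‖ᾱ - α i‖ ≤ p^{-l}` where `l = ⌈(k - ν_i)/e_i⌉`). -/
theorem stmt9 (p : ℕ) [Fact p.Prime] (f : Polynomial ℤ_[p]) (d : ℕ) (hd : d = f.natDegree)
    (n m : ℕ) (α : Fin n → ℤ_[p]) (e : Fin n → ℕ) (he : ∀ i, 1 ≤ e i)
    (hα : Function.Injective α)
    (g : Fin m → Polynomial ℤ_[p]) (t : Fin m → ℕ) (ht : ∀ j, 1 ≤ t j)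
    (hg_irr : ∀ j, Irreducible (g j))
    (hg_noroot : ∀ j (x : ℤ_[p]), (g j).eval x ≠ 0)
    (hg_coprime : ∀ j jQ, j ≠ jQ → ¬ Associated (g j) (g jQ))
    (hfact : f = (∏ i, (X - C (α i)) ^ e i) * ∏ j, g j ^ t j)
    (D : ℤ_[p]) (hD : padicEmb p D = padicDisc p ((∏ i, (X - C (α i))) * ∏ j, g j))
    (hD0 : D ≠ 0) (Δ : ℕ) (hΔ : (Δ : ℤ) = D.valuation)
    (k : ℕ) (hk : d * (Δ + 1) < k)
    (i : Fin n) (fi : Polynomial ℤ_[p])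
    (hfi : f = (X - C (α i)) ^ e i * fi) (hfi0 : fi.eval (α i) ≠ 0)
    (ν : ℕ) (hν : (ν : ℤ) = (fi.eval (α i)).valuation)
    (l : ℕ) (hl : (l : ℤ) = ⌈((k : ℚ) - (ν : ℚ)) / (e i : ℚ)⌉)
    (ᾱ : ℤ_[p]) (hclose : ‖ᾱ - α i‖ < (p : ℝ) ^ (-(Δ : ℤ))) :
    (p : ℤ_[p]) ^ k ∣ f.eval ᾱ ↔ ‖ᾱ - α i‖ ≤ (p : ℝ) ^ (-(l : ℤ)) := by
  have h0 : (∏ i, (X - C (α i))) * ∏ j, g j ≠ 0 :=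
    mul_ne_zero (monic_prod_X_sub_C α _).ne_zero
      (Finset.prod_ne_zero_iff.mpr fun j _ => (hg_irr j).ne_zero)
  exact stmt9_general h0 (fun q hq hqf => hq.dvd_mul.mpr <|
    (hq.dvd_mul.mp (hfact ▸ hqf)).imp
      (prime_dvd_prod_of_dvd_prod_pow hq) (prime_dvd_prod_of_dvd_prod_pow hq))
    hD hD0 hΔ k (he i) hfi hfi0 hν hl hclose
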